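/- (RLOBPCG convergence: singular value bound.) Let A ∈ ℂ^{m×n} have full column rank with singular values σ₁ ≥ … ≥ σ_n > 0, set gap := (σ_{n−1}² − σ_n²)/σ_n², and let S ∈ ℂ^{d×m} be a subspace embedding for A with distortion η ∈ [0,1) satisfying η < gap/(2+gap). Let SA = UΣV* be an SVD of SA, set P := VΣ⁻¹, and v₀ = v_{−1} := P e_n/‖P e_n‖. For i ≥ 0 define w_i := P(P*(A*(A v_i) − ‖A v_i‖²·v_i)), and let v_{i+1} be a unit vector in span{v_{i−1}, v_i, w_i} with ‖A v_{i+1}‖ ≤ ‖A z‖ for every unit vector z ∈ span{v_{i−1}, v_i, w_i}. Then for every k ≥ 0, (‖A v_k‖² − σ_n²)/σ_n² ≤ C·gap·q^{2k}, where C := 2η/((1−η)·gap − 2η) and q := η + (1−η)/(1+gap). -/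

import Mathlib

/-!
Write `H = Aᴴ A` and `M = (S A)ᴴ (S A)`. Then `P Pᴴ = M⁻¹`, and the search direction `wᵢ` is the
residual `H vᵢ - ρ vᵢ`, `ρ = ‖A vᵢ‖²`, preconditioned by `M⁻¹`. Since `v_{i+1}` minimizes the Rayleigh
quotient of `H` over a space containing `vᵢ` and `wᵢ`, it is at least as good as
`x' = vᵢ - (1 - η²) wᵢ`, one step of preconditioned inverse iteration. The embedding property says
that `(1 - η²) M⁻¹` approximates `H⁻¹` with relative error `η` in the `H`-norm
(`sketch_contraction`), and the sharp estimate for such steps (`preconditioned_step`) is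
`(ρ' - σₙ²) / (σₙ₋₁² - ρ') ≤ q² (ρ - σₙ²) / (σₙ₋₁² - ρ)`.

In the variable `u = H^{1/2} x`, a step moves `u`, up to scaling, to some point of the ball of radius
`η ‖H⁻¹ u - ρ⁻¹ u‖` around `H⁻¹ u`. The claim becomes that this ball lies in the cone of
vectors whose Rayleigh quotient for `H⁻¹` is at least some `θ` (`ball_subset_cone`). That is tested on
the supporting functionals of the cone, where it follows from Cauchy-Schwarz inequalities
(`dual_cone_bound`).

The starting vector satisfies `ρ₀ ≤ (1 + η) / (1 - η) σₙ²` (`initial_bound`), so that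
`(ρ₀ - σₙ²) / (σₙ₋₁² - ρ₀) ≤ C`. Iterating the one-step estimate and using
`σₙ₋₁² - ρ_k ≤ gap · σₙ²` gives the bound.
-/

open Matrix

/-- The linear action of a complex matrix on Euclidean space: `mulE A v = A v`. -/
noncomputable def mulE {m n : ℕ} (A : Matrix (Fin m) (Fin n) ℂ)
    (v : EuclideanSpace ℂ (Fin n)) : EuclideanSpace ℂ (Fin m) :=
  Matrix.toEuclideanLin A v

/-- `S` is a subspace embedding for `A` with distortion `η`:
`(1-η)‖Ay‖² ≤ ‖SAy‖² ≤ (1+η)‖Ay‖²` for all `y`. -/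
def IsSubspaceEmbedding {d m n : ℕ} (S : Matrix (Fin d) (Fin m) ℂ)
    (A : Matrix (Fin m) (Fin n) ℂ) (η : ℝ) : Prop :=
  ∀ y : EuclideanSpace ℂ (Fin n),
    (1 - η) * ‖mulE A y‖ ^ 2 ≤ ‖mulE (S * A) y‖ ^ 2 ∧
      ‖mulE (S * A) y‖ ^ 2 ≤ (1 + η) * ‖mulE A y‖ ^ 2

/-- `σ` lists the singular values of `A` in decreasing order: `σ` is antitone, nonnegative,
and there is an orthonormal (eigen)basis `B` with `AᴴA (B i) = σᵢ² • B i`. -/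
def HasSingularValues {m n : ℕ} (A : Matrix (Fin m) (Fin n) ℂ) (σ : Fin n → ℝ) : Prop :=
  Antitone σ ∧ (∀ i, 0 ≤ σ i) ∧
    ∃ B : Fin n → EuclideanSpace ℂ (Fin n), Orthonormal ℂ B ∧
      ∀ i, mulE (Aᴴ * A) (B i) = ((σ i ^ 2 : ℝ) : ℂ) • B i

/-- The spectral norm (largest singular value) of a matrix, as the operator norm of its
action between Euclidean spaces. -/
noncomputable def specNorm {m n : ℕ} (A : Matrix (Fin m) (Fin n) ℂ) : ℝ :=
  ‖LinearMap.toContinuousLinearMap (Matrix.toEuclideanLin A)‖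

/-! ### Balls inside the cone of large Rayleigh quotients -/

/-- Cauchy-Schwarz for `(√(L - Y), √Y)` and `(√(K - X), √X)`. -/
theorem sqrt_sub_mul_sqrt_sub_add_sqrt_le {X Y K L : ℝ} (hX : 0 ≤ X) (hY : 0 ≤ Y)
    (hXK : X ≤ K) (hYL : Y ≤ L) :
    √(L - Y) * √(K - X) + √(X * Y) ≤ √(K * L) := by
  have hL : 0 ≤ L - Y := sub_nonneg.2 hYL
  have hK : 0 ≤ K - X := sub_nonneg.2 hXK
  rw [← Real.sqrt_mul hL]
  have h1 : √((L - Y) * (K - X)) * √(X * Y) ≤ ((L - Y) * X + (K - X) * Y) / 2 := by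
    rw [← Real.sqrt_mul (by positivity)]
    refine Real.sqrt_le_iff.2 ⟨by positivity, ?_⟩
    nlinarith [sq_nonneg ((L - Y) * X - (K - X) * Y)]
  refine Real.le_sqrt_of_sq_le ?_
  rw [add_sq, Real.sq_sqrt (by positivity), Real.sq_sqrt (by positivity)]
  nlinarith

/-- The analytic core of the convergence estimate. Here `a` holds the moduli of the coordinates of a
vector with Rayleigh quotient `M` for `diag(m₀, μ)`, and `(b₀, -b)` is a boundary point of the dual
of the cone of vectors with Rayleigh quotient at least `θ`. The right side pairs that functional
with the centre `diag(m₀, μ) a` of the ball, and the left side is the radius of the ball times the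
norm of the functional.

With weights `αⱼ = (M - μⱼ) aⱼ²` and `βⱼ = bⱼ² / (θ - μⱼ)` with totals `α₀ = (m₀ - M) a₀²`
and `β₀ = b₀² / (m₀ - θ)`, both squared norms become linear in `X = ∑ μⱼ αⱼ`, `Y = ∑ μⱼ βⱼ`. Two
applications of Cauchy-Schwarz and the bounds `X ≤ m₂ α₀`, `Y ≤ m₂ β₀` then reduce the claim to
`q m₀ = γ m₀ + (1 - γ) m₂`. -/
theorem dual_cone_bound {ι : Type*} (J : Finset ι) (μ a b : ι → ℝ)
    {m₀ m₂ M θ γ q a₀ b₀ : ℝ}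
    (hμ0 : ∀ j ∈ J, 0 < μ j) (hμ2 : ∀ j ∈ J, μ j ≤ m₂) (hm2 : 0 < m₂)
    (hM : m₂ < M) (hMθ : M ≤ θ) (hθ : θ < m₀)
    (hγ0 : 0 ≤ γ) (hγ1 : γ ≤ 1) (hq0 : 0 ≤ q) (hq : q * m₀ = γ * m₀ + (1 - γ) * m₂)
    (hrel : (m₀ - θ) * (M - m₂) = q ^ 2 * ((θ - m₂) * (m₀ - M)))
    (ha₀ : 0 ≤ a₀) (hb₀ : 0 ≤ b₀)
    (hα : (m₀ - M) * a₀ ^ 2 = ∑ j ∈ J, (M - μ j) * a j ^ 2)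
    (hβ : b₀ ^ 2 / (m₀ - θ) = ∑ j ∈ J, b j ^ 2 / (θ - μ j)) :
    γ * (√(b₀ ^ 2 + ∑ j ∈ J, b j ^ 2) *
        √((m₀ - M) ^ 2 * a₀ ^ 2 + ∑ j ∈ J, (μ j - M) ^ 2 * a j ^ 2)) ≤
      m₀ * a₀ * b₀ - ∑ j ∈ J, μ j * a j * b j := by
  have hMJ : ∀ j ∈ J, 0 < M - μ j := fun j hj => by linarith [hμ2 j hj]
  have hθJ : ∀ j ∈ J, 0 < θ - μ j := fun j hj => by linarith [hμ2 j hj]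
  have hm0M : 0 < m₀ - M := by linarith
  have hm0θ : 0 < m₀ - θ := by linarith
  have hθ2 : 0 < θ - m₂ := by linarith
  have hM2 : 0 < M - m₂ := by linarith
  set α₀ := (m₀ - M) * a₀ ^ 2 with hα₀
  set β₀ := b₀ ^ 2 / (m₀ - θ) with hβ₀
  set X := ∑ j ∈ J, μ j * ((M - μ j) * a j ^ 2) with hX
  set Y := ∑ j ∈ J, μ j * (b j ^ 2 / (θ - μ j)) with hY
  have hα0 : 0 ≤ α₀ := by positivity
  have hβ0 : 0 ≤ β₀ := by positivity
  have hX0 : 0 ≤ X := Finset.sum_nonneg fun j hj => by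
    have := hμ0 j hj; have := hMJ j hj; positivity
  have hY0 : 0 ≤ Y := Finset.sum_nonneg fun j hj => by
    have := hμ0 j hj; have := hθJ j hj; positivity
  have hX2 : X ≤ m₂ * α₀ := by
    rw [hα, Finset.mul_sum]
    refine Finset.sum_le_sum fun j hj => mul_le_mul_of_nonneg_right (hμ2 j hj) ?_
    have := hMJ j hj; positivity
  have hY2 : Y ≤ m₂ * β₀ := by
    rw [hβ, Finset.mul_sum]
    refine Finset.sum_le_sum fun j hj => mul_le_mul_of_nonneg_right (hμ2 j hj) ?_
    have := hθJ j hj; positivity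
  have hr : (m₀ - M) ^ 2 * a₀ ^ 2 + ∑ j ∈ J, (μ j - M) ^ 2 * a j ^ 2 = m₀ * α₀ - X := by
    have h1 : ∑ j ∈ J, (μ j - M) ^ 2 * a j ^ 2 = M * α₀ - X := by
      rw [hα, hX, Finset.mul_sum, ← Finset.sum_sub_distrib]
      exact Finset.sum_congr rfl fun j _ => by ring
    rw [h1, hα₀]; ring
  have hy : b₀ ^ 2 + ∑ j ∈ J, b j ^ 2 = m₀ * β₀ - Y := by
    have h1 : ∑ j ∈ J, b j ^ 2 = θ * β₀ - Y := by
      rw [hβ, hY, Finset.mul_sum, ← Finset.sum_sub_distrib]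
      refine Finset.sum_congr rfl fun j hj => ?_
      have := (hθJ j hj).ne'
      field_simp
    have h2 : b₀ ^ 2 = (m₀ - θ) * β₀ := by rw [hβ₀]; field_simp
    rw [h1, h2]; ring
  rw [hr, hy]
  set R := √((θ - m₂) / (M - m₂)) with hR
  have hR2 : R ^ 2 = (θ - m₂) / (M - m₂) := Real.sq_sqrt (by positivity)
  have hR1 : 1 ≤ R := by
    rw [hR, Real.one_le_sqrt, one_le_div hM2]; linarith
  -- the off-diagonal sum, by Cauchy-Schwarz and monotonicity of `m ↦ (θ - m) / (M - m)`
  have hsum : ∑ j ∈ J, μ j * a j * b j ≤ R * √(X * Y) := by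
    have h1 : (∑ j ∈ J, μ j * a j * b j) ^ 2 ≤ X * ∑ j ∈ J, μ j * (b j ^ 2 / (M - μ j)) := by
      refine Finset.sum_sq_le_sum_mul_sum_of_sq_le_mul J (fun j hj => ?_) (fun j hj => ?_)
        (fun j hj => ?_)
      · have := hμ0 j hj; have := hMJ j hj; positivity
      · have := hμ0 j hj; have := hMJ j hj; positivity
      · have := (hMJ j hj).ne'
        exact le_of_eq (by field_simp)
    have h2 : ∑ j ∈ J, μ j * (b j ^ 2 / (M - μ j)) ≤ R ^ 2 * Y := by
      rw [hR2, hY, Finset.mul_sum]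
      refine Finset.sum_le_sum fun j hj => ?_
      have e1 := hμ0 j hj
      have e2 := hMJ j hj
      have e3 := hθJ j hj
      have e4 : 1 / (M - μ j) ≤ (θ - m₂) / (M - m₂) * (1 / (θ - μ j)) := by
        rw [div_mul_div_comm, mul_one, div_le_div_iff₀ e2 (by positivity)]
        nlinarith [hμ2 j hj]
      calc μ j * (b j ^ 2 / (M - μ j)) = μ j * b j ^ 2 * (1 / (M - μ j)) := by ring
        _ ≤ μ j * b j ^ 2 * ((θ - m₂) / (M - m₂) * (1 / (θ - μ j))) := by gcongr
        _ = _ := by ring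
    have h3 : (∑ j ∈ J, μ j * a j * b j) ^ 2 ≤ R ^ 2 * (X * Y) :=
      h1.trans ((mul_le_mul_of_nonneg_left h2 hX0).trans_eq (by ring))
    refine (Real.le_sqrt_of_sq_le h3).trans_eq ?_
    rw [Real.sqrt_mul (by positivity), Real.sqrt_sq (by positivity)]
  have hab : a₀ * b₀ = q * R * √(α₀ * β₀) := by
    have h1 : (a₀ * b₀) ^ 2 = (q * R) ^ 2 * (α₀ * β₀) := by
      have : q ^ 2 * (θ - m₂) * (m₀ - M) / ((M - m₂) * (m₀ - θ)) = 1 := by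
        rw [div_eq_one_iff_eq (by positivity)]; linarith
      rw [mul_pow q, hR2, hα₀, hβ₀]
      calc (a₀ * b₀) ^ 2
          = (a₀ * b₀) ^ 2 * (q ^ 2 * (θ - m₂) * (m₀ - M) / ((M - m₂) * (m₀ - θ))) := by
            rw [this, mul_one]
        _ = _ := by field_simp
    rw [← Real.sqrt_sq (mul_nonneg ha₀ hb₀), h1, Real.sqrt_mul (by positivity),
      Real.sqrt_sq (by positivity)]
  have hm20 : m₂ ≤ m₀ := by linarith
  have hm0X : X ≤ m₀ * α₀ := hX2.trans (mul_le_mul_of_nonneg_right hm20 hα0)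
  have hm0Y : Y ≤ m₀ * β₀ := hY2.trans (mul_le_mul_of_nonneg_right hm20 hβ0)
  have hcs : √(m₀ * β₀ - Y) * √(m₀ * α₀ - X) + √(X * Y) ≤ m₀ * √(α₀ * β₀) := by
    have h := sqrt_sub_mul_sqrt_sub_add_sqrt_le hX0 hY0 hm0X hm0Y
    rwa [show m₀ * α₀ * (m₀ * β₀) = m₀ ^ 2 * (α₀ * β₀) by ring, Real.sqrt_mul (sq_nonneg m₀),
      Real.sqrt_sq (by linarith)] at h
  have hXY : √(X * Y) ≤ m₂ * √(α₀ * β₀) := by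
    rw [← Real.sqrt_sq hm2.le, ← Real.sqrt_mul (by positivity)]
    apply Real.sqrt_le_sqrt
    calc X * Y ≤ (m₂ * α₀) * (m₂ * β₀) := by gcongr
      _ = _ := by ring
  have hkey : γ * (√(m₀ * β₀ - Y) * √(m₀ * α₀ - X)) ≤
      q * m₀ * √(α₀ * β₀) - √(X * Y) := by
    rw [hq]
    have h1 := mul_le_mul_of_nonneg_left hcs hγ0
    have h2 := mul_le_mul_of_nonneg_left hXY (sub_nonneg.2 hγ1)
    linear_combination h1 + h2
  have hnn : 0 ≤ γ * (√(m₀ * β₀ - Y) * √(m₀ * α₀ - X)) := by positivity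
  calc γ * (√(m₀ * β₀ - Y) * √(m₀ * α₀ - X))
      ≤ R * (γ * (√(m₀ * β₀ - Y) * √(m₀ * α₀ - X))) := le_mul_of_one_le_left hnn hR1
    _ ≤ R * (q * m₀ * √(α₀ * β₀) - √(X * Y)) := by gcongr
    _ = m₀ * (q * R * √(α₀ * β₀)) - R * √(X * Y) := by ring
    _ ≤ _ := by rw [mul_assoc m₀, hab]; linarith

/-- If `u` has Rayleigh quotient `M` for `D = diag(μ)`, every point `D u - g` of the ball of radius
`γ ‖D u - M u‖` around `D u` has Rayleigh quotient at least `θ`, where `θ` is the value at which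
`(μ₀ - θ) / (θ - m₂) = q² (μ₀ - M) / (M - m₂)`. Passing to moduli reduces the complex cone to the
convex real one, on which the supporting functionals are tested by `dual_cone_bound`. -/
theorem ball_subset_cone {ι : Type*} [Fintype ι] [DecidableEq ι] (i₀ : ι) (μ : ι → ℝ)
    (u g : ι → ℂ) {m₂ M θ γ q : ℝ}
    (hμ0 : ∀ j ≠ i₀, 0 < μ j) (hμ2 : ∀ j ≠ i₀, μ j ≤ m₂) (hm2 : 0 < m₂)
    (hM : m₂ < M) (hMθ : M ≤ θ) (hθ : θ < μ i₀)
    (hγ0 : 0 ≤ γ) (hγ1 : γ ≤ 1) (hq0 : 0 ≤ q) (hq : q * μ i₀ = γ * μ i₀ + (1 - γ) * m₂)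
    (hrel : (μ i₀ - θ) * (M - m₂) = q ^ 2 * ((θ - m₂) * (μ i₀ - M)))
    (hu : ∑ i, (μ i - M) * ‖u i‖ ^ 2 = 0)
    (hg : ∑ i, ‖g i‖ ^ 2 ≤ γ ^ 2 * ∑ i, (μ i - M) ^ 2 * ‖u i‖ ^ 2) :
    0 ≤ ∑ i, (μ i - θ) * ‖(μ i : ℂ) * u i - g i‖ ^ 2 := by
  set J := Finset.univ.erase i₀ with hJ
  have hsplit : ∀ f : ι → ℝ, ∑ i, f i = f i₀ + ∑ j ∈ J, f j := fun f =>
    (Finset.add_sum_erase _ f (Finset.mem_univ i₀)).symm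
  have hne : ∀ j ∈ J, j ≠ i₀ := fun j hj => Finset.ne_of_mem_erase hj
  have hm0 : 0 < μ i₀ := by linarith
  have hm0θ : 0 < μ i₀ - θ := by linarith
  have hθJ : ∀ j ∈ J, 0 < θ - μ j := fun j hj => by linarith [hμ2 j (hne j hj)]
  rw [hsplit] at hu ⊢
  simp only [hsplit] at hg
  set W : ι → ℝ := fun j => μ j * ‖u j‖ + ‖g j‖ with hW
  have hw : ∀ j ∈ J, ‖(μ j : ℂ) * u j - g j‖ ≤ W j := fun j hj => by
    refine (norm_sub_le _ _).trans_eq ?_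
    rw [norm_mul, Complex.norm_real, Real.norm_of_nonneg (hμ0 j (hne j hj)).le]
  have hw0 : μ i₀ * ‖u i₀‖ - ‖g i₀‖ ≤ ‖(μ i₀ : ℂ) * u i₀ - g i₀‖ := by
    refine le_trans (le_of_eq ?_) (norm_sub_norm_le _ _)
    rw [norm_mul, Complex.norm_real, Real.norm_of_nonneg hm0.le]
  set N := √(∑ j ∈ J, (θ - μ j) * W j ^ 2) with hN
  have hN2 : N ^ 2 = ∑ j ∈ J, (θ - μ j) * W j ^ 2 :=
    Real.sq_sqrt (Finset.sum_nonneg fun j hj => by have := hθJ j hj; positivity)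
  have hle : ∑ j ∈ J, (θ - μ j) * ‖(μ j : ℂ) * u j - g j‖ ^ 2 ≤ N ^ 2 := by
    rw [hN2]
    refine Finset.sum_le_sum fun j hj => ?_
    have := hθJ j hj
    have := hw j hj
    gcongr
  have hneg : ∑ j ∈ J, (μ j - θ) * ‖(μ j : ℂ) * u j - g j‖ ^ 2 =
      -∑ j ∈ J, (θ - μ j) * ‖(μ j : ℂ) * u j - g j‖ ^ 2 := by
    rw [← Finset.sum_neg_distrib]; exact Finset.sum_congr rfl fun j _ => by ring
  rw [hneg]
  suffices h : N ^ 2 ≤ (μ i₀ - θ) * ‖(μ i₀ : ℂ) * u i₀ - g i₀‖ ^ 2 by linarith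
  rcases (Real.sqrt_nonneg _ : 0 ≤ N).eq_or_lt with h0 | hNpos
  · have h0' : N = 0 := h0.symm
    rw [h0', zero_pow two_ne_zero]; positivity
  -- the supporting functional of the cone in the direction of `W`
  have hs : 0 < √(μ i₀ - θ) := Real.sqrt_pos.2 hm0θ
  have hs2 : √(μ i₀ - θ) ^ 2 = μ i₀ - θ := Real.sq_sqrt hm0θ.le
  set b₀ := N * √(μ i₀ - θ) with hb₀
  have hd := dual_cone_bound J μ (fun j => ‖u j‖) (fun j => (θ - μ j) * W j) (m₀ := μ i₀)
    (a₀ := ‖u i₀‖) (b₀ := b₀) (fun j hj => hμ0 j (hne j hj)) (fun j hj => hμ2 j (hne j hj))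
    hm2 hM hMθ hθ hγ0 hγ1 hq0 hq hrel (norm_nonneg _) (by positivity)
    (by
      have : ∑ j ∈ J, (M - μ j) * ‖u j‖ ^ 2 = -∑ j ∈ J, (μ j - M) * ‖u j‖ ^ 2 := by
        rw [← Finset.sum_neg_distrib]; exact Finset.sum_congr rfl fun j _ => by ring
      linarith)
    (by
      rw [hb₀, mul_pow, hs2, mul_div_assoc, div_self hm0θ.ne', mul_one, hN2]
      refine Finset.sum_congr rfl fun j hj => ?_
      have := (hθJ j hj).ne'
      field_simp)
  set n1 := √(b₀ ^ 2 + ∑ j ∈ J, ((θ - μ j) * W j) ^ 2)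
  have hcs : b₀ * ‖g i₀‖ + ∑ j ∈ J, (θ - μ j) * W j * ‖g j‖ ≤
      n1 * √(‖g i₀‖ ^ 2 + ∑ j ∈ J, ‖g j‖ ^ 2) := by
    have h := Real.sum_mul_le_sqrt_mul_sqrt Finset.univ
      (fun i => if i = i₀ then b₀ else (θ - μ i) * W i) (fun i => ‖g i‖)
    simp only [hsplit, if_true] at h
    have e1 : ∑ j ∈ J, (if j = i₀ then b₀ else (θ - μ j) * W j) * ‖g j‖ =
        ∑ j ∈ J, (θ - μ j) * W j * ‖g j‖ :=
      Finset.sum_congr rfl fun j hj => by rw [if_neg (hne j hj)]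
    have e2 : ∑ j ∈ J, (if j = i₀ then b₀ else (θ - μ j) * W j) ^ 2 =
        ∑ j ∈ J, ((θ - μ j) * W j) ^ 2 :=
      Finset.sum_congr rfl fun j hj => by rw [if_neg (hne j hj)]
    rwa [e1, e2] at h
  have hgr : √(‖g i₀‖ ^ 2 + ∑ j ∈ J, ‖g j‖ ^ 2) ≤
      γ * √((μ i₀ - M) ^ 2 * ‖u i₀‖ ^ 2 + ∑ j ∈ J, (μ j - M) ^ 2 * ‖u j‖ ^ 2) := by
    refine (Real.sqrt_le_sqrt hg).trans_eq ?_
    rw [Real.sqrt_mul (by positivity), Real.sqrt_sq hγ0]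
  have hfin : N * N ≤ N * (√(μ i₀ - θ) * (μ i₀ * ‖u i₀‖ - ‖g i₀‖)) := by
    have h1 := mul_le_mul_of_nonneg_left hgr (Real.sqrt_nonneg _ : 0 ≤ n1)
    have h2 : N * N = ∑ j ∈ J, μ j * ‖u j‖ * ((θ - μ j) * W j) +
        ∑ j ∈ J, (θ - μ j) * W j * ‖g j‖ := by
      rw [← sq, hN2, ← Finset.sum_add_distrib]
      exact Finset.sum_congr rfl fun j _ => by simp only [hW]; ring
    rw [h2]
    have h3 : N * (√(μ i₀ - θ) * (μ i₀ * ‖u i₀‖ - ‖g i₀‖)) =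
      μ i₀ * ‖u i₀‖ * b₀ - b₀ * ‖g i₀‖ := by rw [hb₀]; ring
    rw [h3]
    linarith
  have h4 : N ≤ √(μ i₀ - θ) * ‖(μ i₀ : ℂ) * u i₀ - g i₀‖ :=
    (le_of_mul_le_mul_left hfin hNpos).trans (by gcongr)
  calc N ^ 2 ≤ (√(μ i₀ - θ) * ‖(μ i₀ : ℂ) * u i₀ - g i₀‖) ^ 2 := by gcongr
    _ = _ := by rw [mul_pow, hs2]

/-! ### One preconditioned step -/

section Step

variable {ι E F G : Type*} [Fintype ι]
  [NormedAddCommGroup E] [InnerProductSpace ℂ E]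
  [NormedAddCommGroup F] [InnerProductSpace ℂ F]
  [NormedAddCommGroup G] [InnerProductSpace ℂ G]

open scoped InnerProductSpace

/-- If `p` represents the sketching error of `z`, that is `a* a p = (c* c - a* a) z` (tested against
`p` only), then `‖a p‖ ≤ η ‖a z‖`: a Hermitian form bounded by `η ‖a ·‖²` on the diagonal is bounded
by `η ‖a ·‖ ‖a ·‖` off it. -/
theorem sketch_error_le (a : E →ₗ[ℂ] F) (c : E →ₗ[ℂ] G) {η : ℝ} (hη0 : 0 ≤ η)
    (hemb : ∀ y, (1 - η) * ‖a y‖ ^ 2 ≤ ‖c y‖ ^ 2 ∧ ‖c y‖ ^ 2 ≤ (1 + η) * ‖a y‖ ^ 2)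
    (z p : E) (hp : ⟪a p, a p⟫_ℂ = ⟪c p, c z⟫_ℂ - ⟪a p, a z⟫_ℂ) :
    ‖a p‖ ^ 2 ≤ η ^ 2 * ‖a z‖ ^ 2 := by
  have hre : ‖a p‖ ^ 2 = RCLike.re ⟪c p, c z⟫_ℂ - RCLike.re ⟪a p, a z⟫_ℂ := by
    rw [← map_sub, ← hp, ← norm_sq_eq_re_inner]
  -- polarization of the form `‖c y‖² - ‖a y‖²` at `t • p ± z`
  have key : ∀ t : ℝ, 2 * t * ‖a p‖ ^ 2 ≤ η * (t ^ 2 * ‖a p‖ ^ 2 + ‖a z‖ ^ 2) := by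
    intro t
    have h1 := (hemb ((t : ℂ) • p + z)).2
    have h2 := (hemb ((t : ℂ) • p - z)).1
    simp only [map_add, map_sub, map_smul] at h1 h2
    rw [norm_add_sq (𝕜 := ℂ), norm_add_sq (𝕜 := ℂ)] at h1
    rw [norm_sub_sq (𝕜 := ℂ), norm_sub_sq (𝕜 := ℂ)] at h2
    have r1 : RCLike.re ⟪(t : ℂ) • c p, c z⟫_ℂ = t * RCLike.re ⟪c p, c z⟫_ℂ := by
      simp
    have r2 : RCLike.re ⟪(t : ℂ) • a p, a z⟫_ℂ = t * RCLike.re ⟪a p, a z⟫_ℂ := by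
      simp
    have r3 : ‖(t : ℂ) • a p‖ ^ 2 = t ^ 2 * ‖a p‖ ^ 2 := by
      rw [norm_smul, mul_pow, Complex.norm_real, Real.norm_eq_abs, sq_abs]
    rw [r1, r2, r3] at h1 h2
    have h3 : t * ‖a p‖ ^ 2 = t * RCLike.re ⟪c p, c z⟫_ℂ - t * RCLike.re ⟪a p, a z⟫_ℂ := by
      rw [hre]; ring
    linarith
  rcases hη0.eq_or_lt with h | h
  · have := key 1
    rw [← h] at this ⊢
    linarith
  · have h1 := mul_le_mul_of_nonneg_left (key (1 / η)) h.le
    have h2 : η * (2 * (1 / η) * ‖a p‖ ^ 2) = 2 * ‖a p‖ ^ 2 := by field_simp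
    have h3 : η * (η * ((1 / η) ^ 2 * ‖a p‖ ^ 2 + ‖a z‖ ^ 2)) =
        ‖a p‖ ^ 2 + η ^ 2 * ‖a z‖ ^ 2 := by field_simp
    linarith

/-- The preconditioner scaled by `1 - η²` has relative error `η`: with `r = a* a (z + p) = c* c z`,
the vector `η² z + p` is `(a* a)⁻¹ r - (1 - η²) (c* c)⁻¹ r`. -/
theorem sketch_contraction (a : E →ₗ[ℂ] F) (c : E →ₗ[ℂ] G) {η : ℝ} (hη0 : 0 ≤ η) (hη1 : η < 1)
    (hemb : ∀ y, (1 - η) * ‖a y‖ ^ 2 ≤ ‖c y‖ ^ 2 ∧ ‖c y‖ ^ 2 ≤ (1 + η) * ‖a y‖ ^ 2)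
    (z p : E) (hp : ⟪a p, a p⟫_ℂ = ⟪c p, c z⟫_ℂ - ⟪a p, a z⟫_ℂ) :
    ‖a (((η ^ 2 : ℝ) : ℂ) • z + p)‖ ^ 2 ≤ η ^ 2 * ‖a (z + p)‖ ^ 2 := by
  have h := sketch_error_le a c hη0 hemb z p hp
  simp only [map_add, map_smul]
  rw [norm_add_sq (𝕜 := ℂ), norm_add_sq (𝕜 := ℂ)]
  have r2 : RCLike.re ⟪((η ^ 2 : ℝ) : ℂ) • a z, a p⟫_ℂ = η ^ 2 * RCLike.re ⟪a z, a p⟫_ℂ := by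
    rw [inner_smul_left, Complex.conj_ofReal]; exact RCLike.re_ofReal_mul _ _
  have r3 : ‖((η ^ 2 : ℝ) : ℂ) • a z‖ ^ 2 = η ^ 4 * ‖a z‖ ^ 2 := by
    rw [norm_smul, mul_pow, Complex.norm_real, Real.norm_eq_abs, sq_abs]; ring
  rw [r2, r3]
  have : 0 ≤ 1 - η ^ 2 := by nlinarith
  nlinarith [mul_le_mul_of_nonneg_left h this]

theorem inner_map_eq_sum (b : OrthonormalBasis ι ℂ E) (lam : ι → ℝ) (a : E →ₗ[ℂ] F)
    (hab : ∀ i x, ⟪a (b i), a x⟫_ℂ = (lam i : ℂ) * ⟪b i, x⟫_ℂ) (x y : E) :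
    ⟪a x, a y⟫_ℂ = ∑ i, (lam i : ℂ) * (⟪x, b i⟫_ℂ * ⟪b i, y⟫_ℂ) := by
  conv_lhs => rw [← b.sum_repr' x]
  simp only [map_sum, map_smul, sum_inner, inner_smul_left, hab, inner_conj_symm]
  exact Finset.sum_congr rfl fun i _ => by ring

theorem norm_map_sq_eq_sum (b : OrthonormalBasis ι ℂ E) (lam : ι → ℝ) (a : E →ₗ[ℂ] F)
    (hab : ∀ i x, ⟪a (b i), a x⟫_ℂ = (lam i : ℂ) * ⟪b i, x⟫_ℂ) (x : E) :
    ‖a x‖ ^ 2 = ∑ i, lam i * ‖⟪b i, x⟫_ℂ‖ ^ 2 := by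
  have h2 : ∀ i, ⟪x, b i⟫_ℂ * ⟪b i, x⟫_ℂ = ((‖⟪b i, x⟫_ℂ‖ ^ 2 : ℝ) : ℂ) := fun i => by
    rw [← inner_conj_symm x (b i), Complex.conj_mul']; push_cast; rfl
  rw [norm_sq_eq_re_inner (𝕜 := ℂ), inner_map_eq_sum b lam a hab x x, map_sum]
  refine Finset.sum_congr rfl fun i _ => ?_
  rw [h2, ← Complex.ofReal_mul]
  exact Complex.ofReal_re _

/-- The sharp one-step estimate. For a unit vector `x` with Rayleigh quotient `ρ` of `a* a`, let `z`
be the preconditioned residual `(c* c)⁻¹ (a* a x - ρ x)`, given in weak form by `hz`. Then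
`x - (1 - η²) z` is nonzero with Rayleigh quotient at most `φ`, where
`(φ - λ₁) / (l₂ - φ) = q² (ρ - λ₁) / (l₂ - ρ)`. In the coordinates `√λᵢ xᵢ` and with
`μᵢ = 1 / λᵢ`, this vector lies in the ball of `ball_subset_cone`. -/
theorem preconditioned_step [DecidableEq ι] (b : OrthonormalBasis ι ℂ E) (lam : ι → ℝ)
    (a : E →ₗ[ℂ] F) (c : E →ₗ[ℂ] G)
    (hab : ∀ i x, ⟪a (b i), a x⟫_ℂ = (lam i : ℂ) * ⟪b i, x⟫_ℂ)
    {η : ℝ} (hη0 : 0 ≤ η) (hη1 : η < 1)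
    (hemb : ∀ y, (1 - η) * ‖a y‖ ^ 2 ≤ ‖c y‖ ^ 2 ∧ ‖c y‖ ^ 2 ≤ (1 + η) * ‖a y‖ ^ 2)
    (i₀ : ι) {l₂ ρ φ q : ℝ} (hl0 : 0 < lam i₀) (hl2 : ∀ j ≠ i₀, l₂ ≤ lam j)
    (hφ : lam i₀ < φ) (hφρ : φ ≤ ρ) (hρ2 : ρ < l₂)
    (hq : q = η + (1 - η) * (lam i₀ / l₂))
    (hrel : (φ - lam i₀) * (l₂ - ρ) = q ^ 2 * ((ρ - lam i₀) * (l₂ - φ)))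
    (x z : E) (hx : ‖x‖ = 1) (hρ : ‖a x‖ ^ 2 = ρ)
    (hz : ∀ y, ⟪c y, c z⟫_ℂ = ⟪a y, a x⟫_ℂ - (ρ : ℂ) * ⟪y, x⟫_ℂ) :
    x - ((1 - η ^ 2 : ℝ) : ℂ) • z ≠ 0 ∧
      ‖a (x - ((1 - η ^ 2 : ℝ) : ℂ) • z)‖ ^ 2 ≤ φ * ‖x - ((1 - η ^ 2 : ℝ) : ℂ) • z‖ ^ 2 := by
  have hφ0 : 0 < φ := hl0.trans hφ
  have hρ0 : 0 < ρ := hφ0.trans_le hφρ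
  have hl20 : 0 < l₂ := hρ0.trans hρ2
  have hlam : ∀ i, 0 < lam i := fun i => by
    by_cases h : i = i₀
    · rwa [h]
    · exact hl20.trans_le (hl2 i h)
  set t : ℝ := 1 - η ^ 2 with ht
  set x' := x - (t : ℂ) • z with hx'
  constructor
  -- the residual is orthogonal to `x`, so `x = t z` would force `c z = 0`
  · intro h0
    have hxz : x = (t : ℂ) • z := sub_eq_zero.1 h0
    have h1 := hz x
    rw [inner_self_eq_norm_sq_to_K, inner_self_eq_norm_sq_to_K, hx] at h1
    have h2 : ⟪c x, c z⟫_ℂ = 0 := by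
      rw [h1, ← hρ]; simp
    have ht0 : (t : ℂ) ≠ 0 := by
      rw [Complex.ofReal_ne_zero]; nlinarith
    have h3 : c z = 0 := by
      rw [hxz, map_smul, inner_smul_left, Complex.conj_ofReal] at h2
      exact inner_self_eq_zero.1 ((mul_eq_zero.1 h2).resolve_left ht0)
    have h4 : c x = 0 := by rw [hxz, map_smul, h3, smul_zero]
    have h5 := (hemb x).1
    rw [h4, hρ] at h5
    norm_num at h5
    nlinarith
  -- `p` solves `a* a p = r - a* a z`, where `r = a* a x - ρ x = c* c z` is the residual
  set p : E := ∑ i, ((1 - ρ / lam i : ℝ) * ⟪b i, x⟫_ℂ - ⟪b i, z⟫_ℂ : ℂ) • b i with hpdef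
  have hpi : ∀ i, ⟪b i, p⟫_ℂ = (1 - ρ / lam i : ℝ) * ⟪b i, x⟫_ℂ - ⟪b i, z⟫_ℂ := fun i => by
    rw [hpdef, b.orthonormal.inner_right_fintype]
  have hp : ⟪a p, a p⟫_ℂ = ⟪c p, c z⟫_ℂ - ⟪a p, a z⟫_ℂ := by
    rw [hz, ← b.sum_inner_mul_inner p x, inner_map_eq_sum b lam a hab p p,
      inner_map_eq_sum b lam a hab p x, inner_map_eq_sum b lam a hab p z, Finset.mul_sum,
      ← Finset.sum_sub_distrib, ← Finset.sum_sub_distrib]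
    refine Finset.sum_congr rfl fun i _ => ?_
    have : (lam i : ℂ) ≠ 0 := Complex.ofReal_ne_zero.2 (hlam i).ne'
    rw [hpi]
    push_cast
    field_simp
  have hcon := sketch_contraction a c hη0 hη1 hemb z p hp
  rw [norm_map_sq_eq_sum b lam a hab, norm_map_sq_eq_sum b lam a hab] at hcon
  have hsq : ∀ i, √(lam i) ^ 2 = lam i := fun i => Real.sq_sqrt (hlam i).le
  have hs0 : ∀ i, 0 < √(lam i) := fun i => Real.sqrt_pos.2 (hlam i)
  have hxi : ∀ i, ⟪b i, x'⟫_ℂ = ⟪b i, x⟫_ℂ - (t : ℂ) * ⟪b i, z⟫_ℂ := fun i => by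
    rw [hx', inner_sub_right, inner_smul_right]
  have hzp : ∀ i, ⟪b i, z + p⟫_ℂ = (1 - ρ / lam i : ℝ) * ⟪b i, x⟫_ℂ := fun i => by
    rw [inner_add_right, hpi]; ring
  have hezp : ∀ i, ⟪b i, ((η ^ 2 : ℝ) : ℂ) • z + p⟫_ℂ =
      ⟪b i, x'⟫_ℂ - (ρ / lam i : ℝ) * ⟪b i, x⟫_ℂ := fun i => by
    rw [inner_add_right, inner_smul_right, hpi, hxi, ht]; push_cast; ring
  have hxsum : ∑ i, ‖⟪b i, x⟫_ℂ‖ ^ 2 = 1 := by rw [b.sum_sq_norm_inner_right, hx, one_pow]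
  have hcone := ball_subset_cone i₀ (fun i => 1 / lam i)
    (fun i => (√(lam i) : ℂ) * ⟪b i, x⟫_ℂ)
    (fun i => -((√(lam i) / ρ : ℝ) : ℂ) * ⟪b i, ((η ^ 2 : ℝ) : ℂ) • z + p⟫_ℂ)
    (m₂ := 1 / l₂) (M := 1 / ρ) (θ := 1 / φ) (γ := η) (q := q)
    (fun j _ => by have := hlam j; positivity)
    (fun j hj => one_div_le_one_div_of_le hl20 (hl2 j hj)) (by positivity)
    (one_div_lt_one_div_of_lt hρ0 hρ2) (one_div_le_one_div_of_le hφ0 hφρ)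
    (one_div_lt_one_div_of_lt hl0 hφ) hη0 hη1.le
    (by
      rw [hq]
      have : 0 ≤ 1 - η := by linarith
      positivity)
    (by rw [hq]; field_simp)
    (by
      field_simp
      linarith)
    (by
      have : ∀ i, (1 / lam i - 1 / ρ) * ‖(√(lam i) : ℂ) * ⟪b i, x⟫_ℂ‖ ^ 2 =
          ‖⟪b i, x⟫_ℂ‖ ^ 2 - 1 / ρ * (lam i * ‖⟪b i, x⟫_ℂ‖ ^ 2) := fun i => by
        rw [norm_mul, mul_pow, Complex.norm_real, Real.norm_eq_abs, sq_abs, hsq]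
        have := (hlam i).ne'
        field_simp
      simp only [this]
      rw [Finset.sum_sub_distrib, ← Finset.mul_sum, hxsum, ← norm_map_sq_eq_sum b lam a hab, hρ]
      field_simp
      norm_num)
    (by
      have e1 : ∀ i, ‖-((√(lam i) / ρ : ℝ) : ℂ) * ⟪b i, ((η ^ 2 : ℝ) : ℂ) • z + p⟫_ℂ‖ ^ 2 =
          1 / ρ ^ 2 * (lam i * ‖⟪b i, ((η ^ 2 : ℝ) : ℂ) • z + p⟫_ℂ‖ ^ 2) := fun i => by
        rw [norm_mul, mul_pow, norm_neg, Complex.norm_real, Real.norm_eq_abs, sq_abs, div_pow, hsq]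
        ring
      have e2 : ∀ i, (1 / lam i - 1 / ρ) ^ 2 * ‖(√(lam i) : ℂ) * ⟪b i, x⟫_ℂ‖ ^ 2 =
          1 / ρ ^ 2 * (lam i * ‖⟪b i, z + p⟫_ℂ‖ ^ 2) := fun i => by
        rw [hzp, norm_mul, norm_mul, mul_pow, mul_pow, Complex.norm_real, Complex.norm_real,
          Real.norm_eq_abs, Real.norm_eq_abs, sq_abs, sq_abs, hsq]
        have := (hlam i).ne'
        field_simp
        ring
      simp only [e1, e2, ← Finset.mul_sum]
      calc _ ≤ 1 / ρ ^ 2 * _ := mul_le_mul_of_nonneg_left hcon (by positivity)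
        _ = _ := by ring)
  have e3 : ∀ i, (1 / lam i - 1 / φ) * ‖((1 / lam i : ℝ) : ℂ) * ((√(lam i) : ℂ) * ⟪b i, x⟫_ℂ) -
      -((√(lam i) / ρ : ℝ) : ℂ) * ⟪b i, ((η ^ 2 : ℝ) : ℂ) • z + p⟫_ℂ‖ ^ 2 =
      1 / ρ ^ 2 * (‖⟪b i, x'⟫_ℂ‖ ^ 2 - 1 / φ * (lam i * ‖⟪b i, x'⟫_ℂ‖ ^ 2)) := fun i => by
    have h0 : (lam i : ℂ) ≠ 0 := Complex.ofReal_ne_zero.2 (hlam i).ne'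
    have h1 : (ρ : ℂ) ≠ 0 := Complex.ofReal_ne_zero.2 hρ0.ne'
    have : ((1 / lam i : ℝ) : ℂ) * ((√(lam i) : ℂ) * ⟪b i, x⟫_ℂ) -
      -((√(lam i) / ρ : ℝ) : ℂ) * ⟪b i, ((η ^ 2 : ℝ) : ℂ) • z + p⟫_ℂ =
        ((√(lam i) / ρ : ℝ) : ℂ) * ⟪b i, x'⟫_ℂ := by
      rw [hezp]; push_cast; field_simp; ring
    rw [this, norm_mul, mul_pow, Complex.norm_real, Real.norm_eq_abs, sq_abs, div_pow, hsq]
    have := (hlam i).ne'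
    field_simp
  simp only [e3] at hcone
  rw [← Finset.mul_sum, Finset.sum_sub_distrib, ← Finset.mul_sum, b.sum_sq_norm_inner_right,
    ← norm_map_sq_eq_sum b lam a hab] at hcone
  have h := nonneg_of_mul_nonneg_right hcone (by positivity)
  have h6 : φ * (‖x'‖ ^ 2 - 1 / φ * ‖a x'‖ ^ 2) = φ * ‖x'‖ ^ 2 - ‖a x'‖ ^ 2 := by field_simp
  have := mul_nonneg hφ0.le h
  linarith

end Step

/-! ### Matrices, the sketched SVD and the starting vector -/

section MatrixFacts

open scoped InnerProductSpace

theorem mulE_mul {l m n : ℕ} (A : Matrix (Fin l) (Fin m) ℂ) (B : Matrix (Fin m) (Fin n) ℂ)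
    (x : EuclideanSpace ℂ (Fin n)) : mulE (A * B) x = mulE A (mulE B x) := by
  simp [mulE, Matrix.toLpLin_apply, Matrix.mulVec_mulVec]

theorem mulE_one {n : ℕ} (x : EuclideanSpace ℂ (Fin n)) :
    mulE (1 : Matrix (Fin n) (Fin n) ℂ) x = x := by
  simp [mulE]

theorem mulE_diagonal_apply {n : ℕ} (f : Fin n → ℂ) (x : EuclideanSpace ℂ (Fin n)) (i : Fin n) :
    mulE (Matrix.diagonal f) x i = f i * x i := by
  simp [mulE, Matrix.toLpLin_apply, Matrix.mulVec_diagonal]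

theorem inner_mulE_mulE {m n : ℕ} (A : Matrix (Fin m) (Fin n) ℂ)
    (x y : EuclideanSpace ℂ (Fin n)) : ⟪mulE A x, mulE A y⟫_ℂ = ⟪x, mulE (Aᴴ * A) y⟫_ℂ := by
  rw [mulE_mul]
  unfold mulE
  rw [Matrix.toEuclideanLin_conjTranspose_eq_adjoint, LinearMap.adjoint_inner_right]

theorem norm_mulE_of_isometry {m n : ℕ} (U : Matrix (Fin m) (Fin n) ℂ) (hU : Uᴴ * U = 1)
    (x : EuclideanSpace ℂ (Fin n)) : ‖mulE U x‖ = ‖x‖ := by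
  have h : ‖mulE U x‖ ^ 2 = ‖x‖ ^ 2 := by
    rw [norm_sq_eq_re_inner (𝕜 := ℂ), inner_mulE_mulE, hU, mulE_one, ← norm_sq_eq_re_inner]
  exact (sq_eq_sq₀ (norm_nonneg _) (norm_nonneg _)).1 h

theorem norm_sq_mulE_svd {d n : ℕ} (U : Matrix (Fin d) (Fin n) ℂ)
    (V : Matrix (Fin n) (Fin n) ℂ) (s : Fin n → ℝ) (hU : Uᴴ * U = 1)
    (y : EuclideanSpace ℂ (Fin n)) :
    ‖mulE (U * Matrix.diagonal (fun i => (s i : ℂ)) * Vᴴ) y‖ ^ 2 =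
      ∑ i, s i ^ 2 * ‖mulE Vᴴ y i‖ ^ 2 := by
  rw [mulE_mul, mulE_mul, norm_mulE_of_isometry U hU, EuclideanSpace.norm_sq_eq]
  refine Finset.sum_congr rfl fun i _ => ?_
  rw [mulE_diagonal_apply, norm_mul, mul_pow, Complex.norm_real, Real.norm_eq_abs, sq_abs]

/-- For `K = U Σ Vᴴ` and `P = V Σ⁻¹`, the product `K P` has orthonormal columns and `P Pᴴ` is the
inverse of the sketched Gram matrix `Kᴴ K`. -/
theorem conjTranspose_mul_self_mul_preconditioner {d n : ℕ} (U : Matrix (Fin d) (Fin n) ℂ)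
    (V : Matrix (Fin n) (Fin n) ℂ) (s : Fin n → ℝ) (hU : Uᴴ * U = 1) (hV : Vᴴ * V = 1)
    (hs : ∀ i, s i ≠ 0) (K : Matrix (Fin d) (Fin n) ℂ)
    (hK : K = U * Matrix.diagonal (fun i => (s i : ℂ)) * Vᴴ)
    (P : Matrix (Fin n) (Fin n) ℂ) (hP : P = V * Matrix.diagonal (fun i => ((s i : ℂ))⁻¹)) :
    K * P = U ∧ Kᴴ * K * (P * Pᴴ) = 1 := by
  have hV' : V * Vᴴ = 1 := mul_eq_one_comm.1 hV
  have hdd : Matrix.diagonal (fun i => (s i : ℂ)) * Matrix.diagonal (fun i => ((s i : ℂ))⁻¹) =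
      1 := by
    rw [Matrix.diagonal_mul_diagonal, ← Matrix.diagonal_one]
    congr 1
    funext i
    exact mul_inv_cancel₀ (Complex.ofReal_ne_zero.2 (hs i))
  have h1 : K * P = U := by
    rw [hK, hP]
    calc _ = U * (Matrix.diagonal (fun i => (s i : ℂ)) * (Vᴴ * V) *
          Matrix.diagonal (fun i => ((s i : ℂ))⁻¹)) := by simp only [Matrix.mul_assoc]
      _ = U := by rw [hV, Matrix.mul_one, hdd, Matrix.mul_one]
  refine ⟨h1, ?_⟩
  have h2 : Pᴴ * Kᴴ = Uᴴ := by rw [← Matrix.conjTranspose_mul, h1]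
  have h3 : Pᴴ * (Kᴴ * K * P) = 1 := by
    rw [Matrix.mul_assoc, h1, ← Matrix.mul_assoc, h2, hU]
  rw [← Matrix.mul_assoc]
  exact mul_eq_one_comm.1 h3

/-- The orthonormal eigenvectors in `HasSingularValues` form a basis, in whose coordinates the form
`⟪A x, A y⟫` is diagonal with entries `σᵢ²`. -/
theorem exists_eigenbasis {m n : ℕ} (hn : 0 < n) (A : Matrix (Fin m) (Fin n) ℂ) (σ : Fin n → ℝ)
    (hσ : HasSingularValues A σ) :
    ∃ b : OrthonormalBasis (Fin n) ℂ (EuclideanSpace ℂ (Fin n)), ∀ i x,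
      ⟪mulE A (b i), mulE A x⟫_ℂ = ((σ i ^ 2 : ℝ) : ℂ) * ⟪b i, x⟫_ℂ := by
  obtain ⟨-, -, B, hB, hBe⟩ := hσ
  have : Nonempty (Fin n) := ⟨⟨0, hn⟩⟩
  have hcoe : ⇑(basisOfOrthonormalOfCardEqFinrank hB (by simp)) = B :=
    coe_basisOfOrthonormalOfCardEqFinrank hB (by simp)
  refine ⟨(basisOfOrthonormalOfCardEqFinrank hB (by simp)).toOrthonormalBasis
    (by rw [hcoe]; exact hB), fun i x => ?_⟩
  rw [Module.Basis.coe_toOrthonormalBasis, hcoe, ← inner_conj_symm, inner_mulE_mulE, hBe,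
    inner_smul_right, map_mul, Complex.conj_ofReal, inner_conj_symm]

/-- Quality of the sketch-and-solve start: `x = P eₙ / ‖P eₙ‖` minimizes `‖S A x‖` over unit vectors,
so its Rayleigh quotient exceeds that of any other unit vector `y` by at most the factor
`(1 + η) / (1 - η)`. -/
theorem initial_bound {d m n : ℕ} (A : Matrix (Fin m) (Fin n) ℂ)
    (S : Matrix (Fin d) (Fin m) ℂ) {η : ℝ}
    (hS : IsSubspaceEmbedding S A η)
    (U : Matrix (Fin d) (Fin n) ℂ) (V : Matrix (Fin n) (Fin n) ℂ) (s : Fin n → ℝ)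
    (hU : Uᴴ * U = 1) (hV : Vᴴ * V = 1) (hs : ∀ i, 0 < s i)
    (hSVD : S * A = U * Matrix.diagonal (fun i => (s i : ℂ)) * Vᴴ)
    (P : Matrix (Fin n) (Fin n) ℂ)
    (hP : P = V * Matrix.diagonal (fun i => ((s i : ℂ))⁻¹))
    (i₀ : Fin n) (hi₀ : ∀ i, s i₀ ≤ s i)
    (x y : EuclideanSpace ℂ (Fin n))
    (hx : x = ‖mulE P (EuclideanSpace.single i₀ (1 : ℂ))‖⁻¹ •
      mulE P (EuclideanSpace.single i₀ (1 : ℂ)))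
    (hy : ‖y‖ = 1) :
    (1 - η) * ‖mulE A x‖ ^ 2 ≤ (1 + η) * ‖mulE A y‖ ^ 2 := by
  set e : EuclideanSpace ℂ (Fin n) := EuclideanSpace.single i₀ (1 : ℂ) with he
  have hKP := (conjTranspose_mul_self_mul_preconditioner U V s hU hV (fun i => (hs i).ne')
    (S * A) hSVD P hP).1
  have hPe : ‖mulE P e‖ = (s i₀)⁻¹ := by
    have h1 : mulE (Matrix.diagonal (fun i => ((s i : ℂ))⁻¹)) e = ((s i₀ : ℂ))⁻¹ • e := by
      ext i
      rw [mulE_diagonal_apply]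
      by_cases h : i = i₀
      · subst h; simp [he]
      · simp [he, h]
    rw [hP, mulE_mul, norm_mulE_of_isometry V hV, h1, norm_smul, he]
    simp [abs_of_pos (hs i₀)]
  have hSx : ‖mulE (S * A) x‖ ^ 2 = s i₀ ^ 2 := by
    have h1 : mulE (S * A) x = ‖mulE P e‖⁻¹ • mulE U e := by
      rw [← hKP, mulE_mul (S * A) P, hx]
      exact LinearMap.map_smul_of_tower (Matrix.toEuclideanLin (S * A)) _ _
    rw [h1, norm_smul, norm_mulE_of_isometry U hU, hPe, he]
    simp
  have hSy : s i₀ ^ 2 ≤ ‖mulE (S * A) y‖ ^ 2 := by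
    rw [hSVD, norm_sq_mulE_svd U V s hU]
    have h1 : ∑ i, ‖mulE Vᴴ y i‖ ^ 2 = 1 := by
      rw [← EuclideanSpace.norm_sq_eq, norm_mulE_of_isometry Vᴴ, hy, one_pow]
      rw [Matrix.conjTranspose_conjTranspose]
      exact mul_eq_one_comm.1 hV
    calc s i₀ ^ 2 = ∑ i, s i₀ ^ 2 * ‖mulE Vᴴ y i‖ ^ 2 := by rw [← Finset.mul_sum, h1, mul_one]
      _ ≤ _ := Finset.sum_le_sum fun i _ => by
        have := hi₀ i
        have := hs i₀
        gcongr
  linarith [(hS x).1, (hS y).2]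

/-- A subspace embedding keeps `A` injective, so the singular values of `S A` do not vanish. -/
theorem singular_values_pos {d m n : ℕ} (A : Matrix (Fin m) (Fin n) ℂ)
    (hrank : Function.Injective (mulE A))
    (S : Matrix (Fin d) (Fin m) ℂ) {η : ℝ} (hη1 : η < 1)
    (hS : IsSubspaceEmbedding S A η)
    (U : Matrix (Fin d) (Fin n) ℂ) (V : Matrix (Fin n) (Fin n) ℂ) (s : Fin n → ℝ)
    (hV : Vᴴ * V = 1) (hs0 : ∀ i, 0 ≤ s i)
    (hSVD : S * A = U * Matrix.diagonal (fun i => (s i : ℂ)) * Vᴴ) (i : Fin n) : 0 < s i := by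
  refine (hs0 i).lt_of_ne fun h => ?_
  set e : EuclideanSpace ℂ (Fin n) := EuclideanSpace.single i (1 : ℂ) with he
  have h1 : mulE (S * A) (mulE V e) = 0 := by
    have h2 : mulE (Matrix.diagonal (fun i => (s i : ℂ))) e = 0 := by
      ext j
      rw [mulE_diagonal_apply]
      by_cases hj : j = i
      · subst hj; simp [← h]
      · simp [he, hj]
    rw [hSVD, mulE_mul, ← mulE_mul Vᴴ, hV, mulE_one, mulE_mul, h2]
    exact map_zero _
  have h3 := (hS (mulE V e)).1
  rw [h1, norm_zero] at h3
  have h4 : ‖mulE A (mulE V e)‖ ^ 2 = 0 := by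
    refine le_antisymm ?_ (sq_nonneg _)
    by_contra hc
    push Not at hc
    nlinarith
  have h5 : mulE A (mulE V e) = mulE A 0 := by
    rw [norm_eq_zero.1 (pow_eq_zero_iff two_ne_zero |>.1 h4)]
    exact (map_zero (Matrix.toEuclideanLin A)).symm
  have h6 : ‖mulE V e‖ = 0 := by rw [hrank h5, norm_zero]
  rw [norm_mulE_of_isometry V hV, he] at h6
  simp at h6

end MatrixFacts

/-! ### Convergence -/

/-- RLOBPCG convergence: singular value bound, Theorem 1.2, eq. (1.5):
under the subspace-embedding and distortion–gap hypotheses, the RLOBPCG iterates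
(with sketch-and-solve initialization `v₀ = v₋₁ = P eₙ/‖P eₙ‖`, search directions
`wᵢ = P(Pᴴ(Aᴴ(A vᵢ) − ‖A vᵢ‖² vᵢ))`, and `vᵢ₊₁` a unit-norm minimizer of `‖Az‖` over the
unit sphere of `span{vᵢ₋₁, vᵢ, wᵢ}`) satisfy
`(‖A v_k‖² − σₙ²)/σₙ² ≤ C·gap·q^{2k}` with `C = 2η/((1−η)gap − 2η)` and
`q = η + (1−η)/(1+gap)`.  (Indices: `σ ⟨n-1⟩ = σₙ`, `σ ⟨n-2⟩ = σₙ₋₁`; `v (i-1)` uses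
truncated subtraction so that `v₋₁ = v₀`.) -/
theorem rlobpcg_singular_value_convergence
    {d m n : ℕ} (hn : 2 ≤ n)
    (A : Matrix (Fin m) (Fin n) ℂ)
    (hrank : Function.Injective (mulE A))
    (σ : Fin n → ℝ) (hσ : HasSingularValues A σ) (hpos : ∀ i, 0 < σ i)
    (gap : ℝ)
    (hgap : gap = (σ ⟨n - 2, by omega⟩ ^ 2 - σ ⟨n - 1, by omega⟩ ^ 2) / σ ⟨n - 1, by omega⟩ ^ 2)
    (S : Matrix (Fin d) (Fin m) ℂ) (η : ℝ) (hη0 : 0 ≤ η) (hη1 : η < 1)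
    (hS : IsSubspaceEmbedding S A η)
    (hηgap : η < gap / (2 + gap))
    (U : Matrix (Fin d) (Fin n) ℂ) (V : Matrix (Fin n) (Fin n) ℂ) (s : Fin n → ℝ)
    (hU : Uᴴ * U = 1) (hV : Vᴴ * V = 1) (hs0 : ∀ i, 0 ≤ s i) (hsa : Antitone s)
    (hSVD : S * A = U * Matrix.diagonal (fun i => (s i : ℂ)) * Vᴴ)
    (P : Matrix (Fin n) (Fin n) ℂ)
    (hP : P = V * Matrix.diagonal (fun i => ((s i : ℂ))⁻¹))
    (e : EuclideanSpace ℂ (Fin n))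
    (he : e = EuclideanSpace.single ⟨n - 1, by omega⟩ (1 : ℂ))
    (v : ℕ → EuclideanSpace ℂ (Fin n))
    (hv0 : v 0 = ‖mulE P e‖⁻¹ • mulE P e)
    (w : ℕ → EuclideanSpace ℂ (Fin n))
    (hw : ∀ i : ℕ, w i = mulE P (mulE Pᴴ
      (mulE Aᴴ (mulE A (v i)) - ((‖mulE A (v i)‖ ^ 2 : ℝ) : ℂ) • v i)))
    (hunit : ∀ i : ℕ, ‖v i‖ = 1)
    (hmem : ∀ i : ℕ, v (i + 1) ∈
      Submodule.span ℂ ({v (i - 1), v i, w i} : Set (EuclideanSpace ℂ (Fin n))))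
    (hmin : ∀ i : ℕ, ∀ z ∈
      Submodule.span ℂ ({v (i - 1), v i, w i} : Set (EuclideanSpace ℂ (Fin n))),
      ‖z‖ = 1 → ‖mulE A (v (i + 1))‖ ≤ ‖mulE A z‖)
    (C q : ℝ) (hC : C = 2 * η / ((1 - η) * gap - 2 * η))
    (hq : q = η + (1 - η) / (1 + gap)) :
    ∀ k : ℕ,
      (‖mulE A (v k)‖ ^ 2 - σ ⟨n - 1, by omega⟩ ^ 2) / σ ⟨n - 1, by omega⟩ ^ 2 ≤
        C * gap * q ^ (2 * k) := by
  set i₀ : Fin n := ⟨n - 1, by omega⟩ with hi₀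
  set i₁ : Fin n := ⟨n - 2, by omega⟩ with hi₁
  obtain ⟨b, hb⟩ := exists_eigenbasis (by omega) A σ hσ
  have hl0 : 0 < σ i₀ ^ 2 := by have := hpos i₀; positivity
  have hl : σ i₁ ^ 2 = (1 + gap) * σ i₀ ^ 2 := by
    rw [hgap]
    have := hl0.ne'
    generalize σ i₀ ^ 2 = l at *
    field_simp
    ring
  have hg2 : σ i₀ ^ 2 ≤ σ i₁ ^ 2 := by
    have h1 : σ i₀ ≤ σ i₁ := hσ.1 (by simp [hi₀, hi₁, Fin.le_def]; omega)
    have := hpos i₀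
    gcongr
  have hgap0 : 0 ≤ gap := by nlinarith
  have hlt : 2 * η < (1 - η) * gap := by
    rw [lt_div_iff₀ (by linarith)] at hηgap; linarith
  have hC0 : 0 ≤ C := by rw [hC]; exact div_nonneg (by linarith) (by linarith)
  have hl2 : ∀ j ≠ i₀, σ i₁ ^ 2 ≤ σ j ^ 2 := fun j hj => by
    have h1 : σ i₁ ≤ σ j := hσ.1 (by
      have h2 : (j : ℕ) ≠ n - 1 := fun h => hj (Fin.ext h)
      have := j.isLt
      simp only [hi₁, Fin.le_def]; omega)
    have := hpos i₁
    gcongr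
  have hs := singular_values_pos A hrank S hη1 hS U V s hV hs0 hSVD
  have hq' : q = η + (1 - η) * (σ i₀ ^ 2 / σ i₁ ^ 2) := by
    have h1 : 1 + gap ≠ 0 := by linarith
    have h2 := hl0.ne'
    rw [hq, hl]
    generalize σ i₀ ^ 2 = l at *
    field_simp
  have hq0 : 0 < q := by
    rw [hq]
    have h1 : 0 < (1 - η) / (1 + gap) := div_pos (by linarith) (by linarith)
    linarith
  have hq1 : q ≤ 1 := by
    have h1 : (1 - η) / (1 + gap) ≤ 1 - η := div_le_self (by linarith) (by linarith)
    linarith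
  -- every unit vector has Rayleigh quotient at least `σₙ²`
  have hmin1 : ∀ x : EuclideanSpace ℂ (Fin n), ‖x‖ = 1 → σ i₀ ^ 2 ≤ ‖mulE A x‖ ^ 2 := by
    intro x hx
    have h1 : ‖mulE A x‖ ^ 2 = _ :=
      norm_map_sq_eq_sum b (fun i => σ i ^ 2) (Matrix.toEuclideanLin A) hb x
    have h2 : ∑ i, ‖inner ℂ (b i) x‖ ^ 2 = 1 := by rw [b.sum_sq_norm_inner_right, hx, one_pow]
    rw [h1]
    calc σ i₀ ^ 2 = ∑ i, σ i₀ ^ 2 * ‖inner ℂ (b i) x‖ ^ 2 := by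
          rw [← Finset.mul_sum, h2, mul_one]
      _ ≤ _ := Finset.sum_le_sum fun i _ => by
        have h3 : σ i₀ ^ 2 ≤ σ i ^ 2 := by
          by_cases h : i = i₀
          · rw [h]
          · exact hg2.trans (hl2 i h)
        gcongr
  have hmain : ∀ k : ℕ, ‖mulE A (v k)‖ ^ 2 < σ i₁ ^ 2 ∧
      ‖mulE A (v k)‖ ^ 2 - σ i₀ ^ 2 ≤ C * q ^ (2 * k) * (σ i₁ ^ 2 - ‖mulE A (v k)‖ ^ 2) := by
    intro k
    induction k with
    | zero =>
      have hbn : ‖mulE A (b i₀)‖ ^ 2 = σ i₀ ^ 2 := by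
        have h1 := hb i₀ (b i₀)
        rw [inner_self_eq_norm_sq_to_K, inner_self_eq_norm_sq_to_K, b.norm_eq_one] at h1
        have h2 : ((‖mulE A (b i₀)‖ ^ 2 : ℝ) : ℂ) = ((σ i₀ ^ 2 : ℝ) : ℂ) := by
          rw [Complex.ofReal_pow]
          refine Eq.trans h1 ?_
          simp
        exact Complex.ofReal_injective h2
      have h0 := initial_bound A S hS U V s hU hV hs hSVD P hP i₀
        (fun i => hsa (by have := i.isLt; simp only [hi₀, Fin.le_def]; omega))
        (v 0) (b i₀) (by rw [hv0, he]) (b.norm_eq_one i₀)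
      rw [hbn] at h0
      set ρ := ‖mulE A (v 0)‖ ^ 2
      have h1 : ρ < σ i₁ ^ 2 := by
        rw [hl]
        have h2 : (1 + η) * σ i₀ ^ 2 < (1 - η) * ((1 + gap) * σ i₀ ^ 2) := by nlinarith
        have h3 : 0 < 1 - η := by linarith
        exact lt_of_mul_lt_mul_left (h0.trans_lt h2) h3.le
      refine ⟨h1, ?_⟩
      have hd : 0 < (1 - η) * gap - 2 * η := by linarith
      rw [Nat.mul_zero, pow_zero, mul_one, hC, hl, div_mul_eq_mul_div, le_div_iff₀ hd]
      have h4 : 0 ≤ gap * ((1 + η) * σ i₀ ^ 2 - (1 - η) * ρ) := mul_nonneg hgap0 (by linarith)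
      linear_combination h4
    | succ k ih =>
      obtain ⟨ih1, ih2⟩ := ih
      have hmem1 : v k ∈ Submodule.span ℂ
          ({v (k - 1), v k, w k} : Set (EuclideanSpace ℂ (Fin n))) :=
        Submodule.subset_span (by simp)
      have hmem2 : w k ∈ Submodule.span ℂ
          ({v (k - 1), v k, w k} : Set (EuclideanSpace ℂ (Fin n))) :=
        Submodule.subset_span (by simp)
      have hmono : ‖mulE A (v (k + 1))‖ ^ 2 ≤ ‖mulE A (v k)‖ ^ 2 := by
        have := hmin k (v k) hmem1 (hunit k)
        gcongr
      have hlow := hmin1 (v k) (hunit k)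
      have hlow' := hmin1 (v (k + 1)) (hunit (k + 1))
      set ρ := ‖mulE A (v k)‖ ^ 2 with hρ
      set ρ' := ‖mulE A (v (k + 1))‖ ^ 2 with hρ'
      refine ⟨hmono.trans_lt ih1, ?_⟩
      rcases hlow.eq_or_lt with heq | hlow
      · have h1 : ρ' - σ i₀ ^ 2 ≤ 0 := by linarith
        refine h1.trans (mul_nonneg (by positivity) (by linarith))
      -- `τ` is the target for `(ρ' - σₙ²) / (σₙ₋₁² - ρ')`, and `φ` the value of `ρ'` attaining it
      set τ := q ^ 2 * ((ρ - σ i₀ ^ 2) / (σ i₁ ^ 2 - ρ)) with hτ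
      have hτ0 : 0 < τ := by
        have : 0 < (ρ - σ i₀ ^ 2) / (σ i₁ ^ 2 - ρ) := div_pos (by linarith) (by linarith)
        positivity
      have hτρ : τ * (σ i₁ ^ 2 - ρ) = q ^ 2 * (ρ - σ i₀ ^ 2) := by
        have : σ i₁ ^ 2 - ρ ≠ 0 := by linarith
        rw [hτ]; field_simp
      set φ := (σ i₀ ^ 2 + τ * σ i₁ ^ 2) / (1 + τ) with hφ
      have hφτ : φ - σ i₀ ^ 2 = τ * (σ i₁ ^ 2 - φ) := by
        rw [hφ]; field_simp; ring
      have hφ1 : σ i₀ ^ 2 < φ := by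
        rw [hφ, lt_div_iff₀ (by linarith)]; nlinarith
      have hφ2 : φ ≤ ρ := by
        rw [hφ, div_le_iff₀ (by linarith)]
        have h1 : q ^ 2 * (ρ - σ i₀ ^ 2) ≤ ρ - σ i₀ ^ 2 :=
          mul_le_of_le_one_left (by linarith) (pow_le_one₀ hq0.le hq1)
        linarith
      have hrel : (φ - σ i₀ ^ 2) * (σ i₁ ^ 2 - ρ) =
          q ^ 2 * ((ρ - σ i₀ ^ 2) * (σ i₁ ^ 2 - φ)) := by
        rw [hφτ, mul_right_comm, hτρ]; ring
      have hz : ∀ y, inner ℂ (mulE (S * A) y) (mulE (S * A) (w k)) =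
          inner ℂ (mulE A y) (mulE A (v k)) - (ρ : ℂ) * inner ℂ y (v k) := by
        intro y
        have hPP := (conjTranspose_mul_self_mul_preconditioner U V s hU hV (fun i => (hs i).ne')
          (S * A) hSVD P hP).2
        rw [inner_mulE_mulE, inner_mulE_mulE, hw, ← mulE_mul P, ← mulE_mul, hPP, mulE_one,
          inner_sub_right, inner_smul_right, mulE_mul]
      obtain ⟨hne, hstep⟩ := preconditioned_step b (fun i => σ i ^ 2) (Matrix.toEuclideanLin A)
        (Matrix.toEuclideanLin (S * A)) hb hη0 hη1 hS i₀ hl0 hl2 hφ1 hφ2 ih1 hq' hrel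
        (v k) (w k) (hunit k) hρ.symm hz
      set x' := v k - ((1 - η ^ 2 : ℝ) : ℂ) • w k with hx'
      have hx'0 : 0 < ‖x'‖ := norm_pos_iff.2 hne
      have hle : ρ' ≤ φ := by
        have hin := hmin k (((‖x'‖⁻¹ : ℝ) : ℂ) • x')
          (Submodule.smul_mem _ _ (Submodule.sub_mem _ hmem1 (Submodule.smul_mem _ _ hmem2)))
          (by rw [norm_smul, Complex.norm_real, norm_inv, norm_norm, inv_mul_cancel₀ hx'0.ne'])
        have h1 : ‖mulE A (((‖x'‖⁻¹ : ℝ) : ℂ) • x')‖ =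
            ‖x'‖⁻¹ * ‖Matrix.toEuclideanLin A x'‖ := by
          unfold mulE
          rw [map_smul, norm_smul, Complex.norm_real, norm_inv, norm_norm]
        rw [h1] at hin
        calc ρ' ≤ (‖x'‖⁻¹ * ‖Matrix.toEuclideanLin A x'‖) ^ 2 := by rw [hρ']; gcongr
          _ = (‖x'‖⁻¹) ^ 2 * ‖Matrix.toEuclideanLin A x'‖ ^ 2 := by ring
          _ ≤ (‖x'‖⁻¹) ^ 2 * (φ * ‖x'‖ ^ 2) := by gcongr
          _ = φ := by field_simp
      have hfin : ρ' - σ i₀ ^ 2 ≤ τ * (σ i₁ ^ 2 - ρ') := by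
        have := mul_le_mul_of_nonneg_left hle hτ0.le
        linarith
      have hτC : τ ≤ C * q ^ (2 * (k + 1)) := by
        have h1 : (ρ - σ i₀ ^ 2) / (σ i₁ ^ 2 - ρ) ≤ C * q ^ (2 * k) := by
          rw [div_le_iff₀ (by linarith)]; exact ih2
        calc τ ≤ q ^ 2 * (C * q ^ (2 * k)) := by rw [hτ]; gcongr
          _ = _ := by ring
      exact hfin.trans (mul_le_mul_of_nonneg_right hτC (by linarith))
  intro k
  obtain ⟨-, h⟩ := hmain k
  rw [div_le_iff₀ hl0]
  have hlow := hmin1 (v k) (hunit k)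
  calc _ ≤ C * q ^ (2 * k) * (σ i₁ ^ 2 - ‖mulE A (v k)‖ ^ 2) := h
    _ ≤ C * q ^ (2 * k) * (gap * σ i₀ ^ 2) := by
      have : σ i₁ ^ 2 - ‖mulE A (v k)‖ ^ 2 ≤ gap * σ i₀ ^ 2 := by rw [hl]; linarith
      gcongr
    _ = _ := by ring
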